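/- For every integer k ≥ 1, every real number a not of the form -j/2 with j a nonnegative integer, and every real z with 0 < z < 1: Φ_HCB(k,a,z) = (4^a / (C(2a,a)·a^k)) · z^{2a} · _{k+1}F_k(1, a, …, a ; a+1/2, a+1, …, a+1 ; z²), where the upper parameter list consists of 1 followed by k copies of a, and the lower parameter list consists of a+1/2 followed by k-1 copies of a+1. -/

import Mathlib

/-- The generalized binomial coefficient `C(x,y) = Γ(x+1)/(Γ(y+1) Γ(x-y+1))`. -/
noncomputable def genBinom (x y : ℝ) : ℝ :=
  Real.Gamma (x + 1) / (Real.Gamma (y + 1) * Real.Gamma (x - y + 1))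

/-- The Hurwitz–Lerch type central binomial series
`Φ_HCB(s,a,z) = ∑_{n≥0} (2z)^{2(n+a)} / ( C(2(n+a), n+a) (n+a)^s )`. -/
noncomputable def PhiHCB (s : ℤ) (a z : ℝ) : ℝ :=
  ∑' n : ℕ, (2 * z) ^ (2 * ((n : ℝ) + a)) /
    (genBinom (2 * ((n : ℝ) + a)) ((n : ℝ) + a) * ((n : ℝ) + a) ^ s)

/-- The shifted factorial (Pochhammer symbol) `(α)_n = α(α+1)⋯(α+n-1)`, `(α)_0 = 1`. -/
def poch (α : ℝ) : ℕ → ℝ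
  | 0 => 1
  | n + 1 => poch α n * (α + n)

/-- The generalized hypergeometric series with upper parameters `as`, lower parameters `bs`:
`∑_{n≥0} (∏_{α ∈ as} (α)_n) / ((∏_{β ∈ bs} (β)_n) n!) zⁿ`. -/
noncomputable def pFq (as bs : List ℝ) (z : ℝ) : ℝ :=
  ∑' n : ℕ, (as.map fun α => poch α n).prod / ((bs.map fun β => poch β n).prod *
    (Nat.factorial n : ℝ)) * z ^ n

/-!
By Legendre's duplication formula `C(2x, x) = 4ˣ Γ(x + 1/2) / (√π Γ(x + 1))`, so the summand of
`Φ_HCB` at `x = n + a` is `√π z²ˣ Γ(x + 1) / (Γ(x + 1/2) xˢ)`. Written with Pochhammer symbols it is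
the summand at `n = 0` times `(a + 1)ₙ / (a + 1/2)ₙ · (a / (a + n))ˢ · z²ⁿ`, and
`(a)ₙ = a / (a + n) · (a + 1)ₙ` turns this into the hypergeometric summand. Log-convexity of `Γ`
bounds the Gamma quotient by a multiple of `n^(1/2)`, which gives convergence.
-/

open Asymptotics Filter Real

/-- The upper half of Wendel's inequality. -/
theorem Gamma_add_le_rpow_mul_Gamma {x s : ℝ} (hx : 0 < x) (hs₀ : 0 < s) (hs₁ : s < 1) :
    Gamma (x + s) ≤ x ^ s * Gamma x := by
  have hΓ : 0 < Gamma x := Gamma_pos_of_pos hx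
  calc
    Gamma (x + s) = Gamma ((1 - s) * x + s * (x + 1)) := by ring_nf
    _ ≤ Gamma x ^ (1 - s) * Gamma (x + 1) ^ s :=
      Gamma_mul_add_mul_le_rpow_Gamma_mul_rpow_Gamma hx (by positivity) (sub_pos.2 hs₁) hs₀
        (sub_add_cancel 1 s)
    _ = x ^ s * (Gamma x ^ (1 - s) * Gamma x ^ s) := by
      rw [Gamma_add_one hx.ne', mul_rpow hx.le hΓ.le]; ring
    _ = x ^ s * Gamma x := by rw [← rpow_add hΓ, sub_add_cancel, rpow_one]

theorem isBigO_Gamma_add_div_Gamma {s : ℝ} (hs₀ : 0 < s) (hs₁ : s < 1) :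
    (fun x : ℝ => Gamma (x + s) / Gamma x) =O[atTop] fun x : ℝ => x ^ s := by
  refine IsBigO.of_bound' ?_
  filter_upwards [eventually_gt_atTop 0] with x hx
  have hΓ : 0 < Gamma x := Gamma_pos_of_pos hx
  have hquot : 0 ≤ Gamma (x + s) / Gamma x :=
    div_nonneg (Gamma_pos_of_pos (by positivity)).le hΓ.le
  rw [norm_of_nonneg hquot, norm_of_nonneg (by positivity), div_le_iff₀ hΓ]
  exact Gamma_add_le_rpow_mul_Gamma hx hs₀ hs₁

theorem natCast_add_isEquivalent (c : ℝ) :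
    (fun n : ℕ => (n : ℝ) + c) ~[atTop] fun n : ℕ => (n : ℝ) :=
  IsEquivalent.refl.add_const_of_norm_tendsto_atTop <|
    tendsto_norm_atTop_atTop.comp tendsto_natCast_atTop_atTop

theorem summable_rpow_mul_geometric (p : ℝ) {r : ℝ} (hr : ‖r‖ < 1) :
    Summable fun n : ℕ => (n : ℝ) ^ p * r ^ n := by
  obtain ⟨m, hm⟩ := exists_nat_ge p
  have hpow : (fun n : ℕ => (n : ℝ) ^ p) =O[atTop] fun n : ℕ => (n : ℝ) ^ m := by
    refine IsBigO.of_bound' ?_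
    filter_upwards [eventually_ge_atTop 1] with n hn
    rw [norm_of_nonneg (by positivity), norm_of_nonneg (by positivity), ← rpow_natCast]
    exact rpow_le_rpow_of_exponent_le (by exact_mod_cast hn) hm
  exact summable_of_isBigO_nat (summable_pow_mul_geometric_of_norm_lt_one m hr)
    (hpow.mul (isBigO_refl _ _))

theorem poch_one (n : ℕ) : poch 1 n = n.factorial := by
  induction n with
  | zero => simp [poch]
  | succ n ih => rw [poch, ih, Nat.factorial_succ]; push_cast; ring

theorem poch_mul_add (α : ℝ) (n : ℕ) : poch α n * (α + n) = α * poch (α + 1) n := by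
  induction n with
  | zero => simp [poch]
  | succ n ih =>
    simp only [poch]
    push_cast
    linear_combination (α + 1 + n) * ih

theorem Gamma_add_natCast {α : ℝ} (hα : ∀ m : ℕ, α ≠ -m) (n : ℕ) :
    Gamma (α + n) = poch α n * Gamma α := by
  induction n with
  | zero => simp [poch]
  | succ n ih =>
    have hn : α + n ≠ 0 := fun h => hα n (eq_neg_of_add_eq_zero_left h)
    rw [Nat.cast_succ, ← add_assoc, Gamma_add_one hn, ih, poch]
    ring

theorem pFq_one_cons_replicate {a : ℝ} (ha : ∀ m : ℕ, a ≠ -m) (b w : ℝ) (k : ℕ) :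
    pFq (1 :: List.replicate (k + 1) a) (b :: List.replicate k (a + 1)) w =
      ∑' n : ℕ, poch (a + 1) n / poch b n * (a / (n + a)) ^ (k + 1) * w ^ n := by
  refine tsum_congr fun n => ?_
  have hna : (n : ℝ) + a ≠ 0 := fun h => ha n (eq_neg_of_add_eq_zero_right h)
  have hpoch : poch a n = a / (n + a) * poch (a + 1) n := by
    rw [div_mul_eq_mul_div, eq_div_iff hna, add_comm (n : ℝ), poch_mul_add]
  have hcancel : poch (a + 1) n ^ (k + 1) / poch (a + 1) n ^ k = poch (a + 1) n := by
    rcases eq_or_ne (poch (a + 1) n) 0 with h | h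
    · simp [h]
    · rw [pow_succ, mul_div_cancel_left₀ _ (pow_ne_zero k h)]
  have hfact : (n.factorial : ℝ) ≠ 0 := by positivity
  simp only [List.map_cons, List.map_replicate, List.prod_cons, List.prod_replicate, poch_one]
  congr 1
  calc
    n.factorial * poch a n ^ (k + 1) / (poch b n * poch (a + 1) n ^ k * n.factorial)
      = poch a n ^ (k + 1) / (poch b n * poch (a + 1) n ^ k) := by
        rw [mul_comm, mul_div_mul_right _ _ hfact]
    _ = poch (a + 1) n ^ (k + 1) / poch (a + 1) n ^ k / poch b n * (a / (n + a)) ^ (k + 1) := by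
        rw [hpoch, mul_pow]; ring
    _ = poch (a + 1) n / poch b n * (a / (n + a)) ^ (k + 1) := by rw [hcancel]

/-- `Real.Gamma` takes the value `0` at its poles, so both sides vanish when `x + 1` is a
nonpositive integer. -/
theorem genBinom_two_mul_self (x : ℝ) :
    genBinom (2 * x) x = 4 ^ x * Gamma (x + 1 / 2) / (√π * Gamma (x + 1)) := by
  have hdup : Gamma (x + 1 / 2) * Gamma (x + 1) = Gamma (2 * x + 1) * √π / 4 ^ x := by
    have h := Gamma_mul_Gamma_add_half (x + 1 / 2)
    rw [show x + 1 / 2 + 1 / 2 = x + 1 by ring, show 2 * (x + 1 / 2) = 2 * x + 1 by ring,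
      show 1 - (2 * x + 1) = -(2 * x) by ring, rpow_neg two_pos.le, rpow_mul two_pos.le,
      rpow_two, show (2 : ℝ) ^ 2 = 4 by norm_num] at h
    rw [h]; ring
  rw [genBinom, show 2 * x - x + 1 = x + 1 by ring]
  rcases eq_or_ne (Gamma (x + 1)) 0 with h | h
  · simp [h]
  · have hπ : √π ≠ 0 := by positivity
    have h4 : (4 : ℝ) ^ x ≠ 0 := by positivity
    field_simp at hdup ⊢
    linear_combination -hdup

section phiHCBSummand

/-- The `n`-th summand of the series `PhiHCB s a z`. -/
noncomputable def phiHCBSummand (s : ℤ) (a z : ℝ) (n : ℕ) : ℝ :=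
  (2 * z) ^ (2 * ((n : ℝ) + a)) /
    (genBinom (2 * ((n : ℝ) + a)) ((n : ℝ) + a) * ((n : ℝ) + a) ^ s)

variable (s : ℤ) (a : ℝ) {z : ℝ}

theorem phiHCBSummand_eq_Gamma (hz : 0 < z) (n : ℕ) :
    phiHCBSummand s a z n =
      √π * z ^ (2 * a) * (Gamma (n + a + 1) / Gamma (n + a + 1 / 2)) / (n + a) ^ s *
        (z ^ 2) ^ n := by
  have hpow : (2 * z) ^ (2 * (n + a)) = 4 ^ (n + a) * (z ^ (2 * a) * (z ^ 2) ^ n) := by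
    rw [mul_rpow two_pos.le hz.le, rpow_mul two_pos.le, mul_add, rpow_add hz,
      rpow_mul hz.le 2 n, rpow_natCast, rpow_two, rpow_two,
      show (2 : ℝ) ^ 2 = 4 by norm_num]
    ring
  have h4 : (4 : ℝ) ^ (n + a) ≠ 0 := by positivity
  rw [phiHCBSummand, hpow, genBinom_two_mul_self]
  simp only [div_eq_mul_inv, mul_inv, inv_inv]
  field_simp

theorem phiHCBSummand_zero (hz : 0 < z) :
    phiHCBSummand s a z 0 = 4 ^ a / (genBinom (2 * a) a * a ^ s) * z ^ (2 * a) := by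
  rw [phiHCBSummand, Nat.cast_zero, zero_add, mul_rpow two_pos.le hz.le, rpow_mul two_pos.le,
    rpow_two, show (2 : ℝ) ^ 2 = 4 by norm_num]
  ring

variable {a} in
theorem phiHCBSummand_eq_zero_mul (ha : ∀ m : ℕ, a ≠ -m) (ha' : ∀ m : ℕ, a + 1 / 2 ≠ -m)
    (hz : 0 < z) (n : ℕ) :
    phiHCBSummand s a z n = phiHCBSummand s a z 0 *
      (poch (a + 1) n / poch (a + 1 / 2) n * (a / (n + a)) ^ s * (z ^ 2) ^ n) := by
  have ha₀ : a ≠ 0 := by simpa using ha 0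
  have ha₁ (m : ℕ) : a + 1 ≠ -m := fun h => ha (m + 1) (by push_cast; linear_combination h)
  have hshift (c : ℝ) : n + a + c = a + c + n := by ring
  rw [phiHCBSummand_eq_Gamma s a hz, phiHCBSummand_eq_Gamma s a hz 0, hshift, hshift,
    Gamma_add_natCast ha₁, Gamma_add_natCast ha', div_zpow]
  simp only [Nat.cast_zero, zero_add, pow_zero]
  field_simp

theorem phiHCBSummand_isBigO (hz : 0 < z) :
    phiHCBSummand s a z =O[atTop] fun n : ℕ => (n : ℝ) ^ (1 / 2 - s : ℝ) * (z ^ 2) ^ n := by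
  have hΓ : (fun n : ℕ => Gamma (n + a + 1) / Gamma (n + a + 1 / 2)) =O[atTop]
      fun n : ℕ => (n : ℝ) ^ (1 / 2 : ℝ) := by
    have hshift := natCast_add_isEquivalent (a + 1 / 2)
    have hratio := (isBigO_Gamma_add_div_Gamma one_half_pos one_half_lt_one).comp_tendsto
      (hshift.symm.tendsto_atTop tendsto_natCast_atTop_atTop)
    refine (hratio.congr_left fun n => ?_).trans
      (hshift.isBigO.rpow (by norm_num) (.of_forall fun n => n.cast_nonneg))
    simp only [Function.comp_apply]
    ring_nf
  have hpow : (fun n : ℕ => ((n + a) ^ s)⁻¹) =O[atTop] fun n : ℕ => ((n : ℝ) ^ s)⁻¹ :=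
    ((natCast_add_isEquivalent a).zpow s).inv.isBigO
  refine (((hΓ.mul hpow).const_mul_left (√π * z ^ (2 * a))).mul
    (isBigO_refl (fun n => (z ^ 2) ^ n) _)).congr' (.of_forall fun n => ?_) ?_
  · simp only [phiHCBSummand_eq_Gamma s a hz]
    ring
  · filter_upwards [eventually_gt_atTop 0] with n hn
    rw [rpow_sub (by exact_mod_cast hn), rpow_intCast, div_eq_mul_inv (_ ^ _)]

variable {s} in
theorem summable_phiHCBSummand (hz : 0 < z) (hconv : z < 1 ∨ z = 1 ∧ 2 ≤ s) :
    Summable (phiHCBSummand s a z) := by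
  refine summable_of_isBigO_nat ?_ (phiHCBSummand_isBigO s a hz)
  rcases hconv with hz₁ | ⟨rfl, hs⟩
  · exact summable_rpow_mul_geometric _ <| by
      rw [norm_of_nonneg (sq_nonneg z)]
      exact pow_lt_one₀ hz.le hz₁ two_ne_zero
  · have hs' : (2 : ℝ) ≤ s := by exact_mod_cast hs
    simpa using summable_nat_rpow.2 (by linarith : (1 / 2 - s : ℝ) < -1)

end phiHCBSummand

theorem phiHCB_pos_hypergeometric_general {k : ℕ} (hk : 1 ≤ k) {a : ℝ}
    (ha : ∀ j : ℕ, a ≠ -(j : ℝ) / 2) {z : ℝ} (hz : 0 < z) (hconv : z < 1 ∨ z = 1 ∧ 2 ≤ k) :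
    HasSum (phiHCBSummand k a z)
      ((4 : ℝ) ^ a / (genBinom (2 * a) a * a ^ k) * z ^ (2 * a) *
        pFq ((1 : ℝ) :: List.replicate k a)
          ((a + 1 / 2) :: List.replicate (k - 1) (a + 1)) (z ^ 2)) := by
  have ha_int (m : ℕ) : a ≠ -m := fun h => ha (2 * m) (by push_cast; linear_combination h)
  have ha_half (m : ℕ) : a + 1 / 2 ≠ -m := fun h =>
    ha (2 * m + 1) (by push_cast; linear_combination h)
  have hsum : Summable (phiHCBSummand k a z) :=
    summable_phiHCBSummand a hz (by exact_mod_cast hconv)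
  obtain ⟨k, rfl⟩ := Nat.exists_eq_add_of_le' hk
  rw [Nat.add_sub_cancel, pFq_one_cons_replicate ha_int, ← zpow_natCast a,
    ← phiHCBSummand_zero _ a hz, ← tsum_mul_left]
  convert! hsum.hasSum using 2
  funext n
  rw [phiHCBSummand_eq_zero_mul _ ha_int ha_half hz n, zpow_natCast]

/-- For every integer `k ≥ 1`, real `a` not of the form `-j/2` (`j ∈ ℤ_{≥0}`), and `0 < z < 1`:
`Φ_HCB(k,a,z) = (4^a/(C(2a,a) a^k)) z^{2a}
  ⬝ _{k+1}F_k(1, a, …, a ; a+1/2, a+1, …, a+1 ; z²)`,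
where the upper parameters are `1` followed by `k` copies of `a` and the lower parameters are
`a+1/2` followed by `k-1` copies of `a+1`. -/
theorem phiHCB_pos_hypergeometric (k : ℕ) (hk : 1 ≤ k) (a : ℝ)
    (ha : ∀ j : ℕ, a ≠ -(j : ℝ) / 2) (z : ℝ) (hz0 : 0 < z) (hz1 : z < 1) :
    PhiHCB k a z =
      (4 : ℝ) ^ a / (genBinom (2 * a) a * a ^ k) * z ^ (2 * a) *
        pFq ((1 : ℝ) :: List.replicate k a)
          ((a + 1 / 2) :: List.replicate (k - 1) (a + 1)) (z ^ 2) := by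
  exact (phiHCB_pos_hypergeometric_general hk ha hz0 (.inl hz1)).tsum_eq
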